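/- Let G be a finite simple graph with two cycles sharing a vertex and k ≥ 2. Then α_k(G) ≥ ((k−1)/k)·(n − ω(G) + 1), where n = |V(G)| and ω(G) is the cycle-space dimension. In particular, equality α_k(G) = ((k−1)/k)(n − ω(G)) forces the cycles of G to be pairwise vertex-disjoint. -/

import Mathlib

open SimpleGraph

/-- A set `S` is a generalized `k`-independent set in `G` if the induced subgraph `G[S]`
contains no tree on `k` vertices, equivalently every connected component of `G[S]`
has at most `k - 1` vertices. -/
def IsGenKIndep {V : Type*} (G : SimpleGraph V) (k : ℕ) (S : Set V) : Prop :=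
  ∀ c : (G.induce S).ConnectedComponent, Nat.card c.supp ≤ k - 1

/-- The generalized `k`-independence number: the maximum size of a generalized
`k`-independent set. -/
noncomputable def alphaK {V : Type*} (G : SimpleGraph V) (k : ℕ) : ℕ :=
  sSup {m | ∃ S : Set V, IsGenKIndep G k S ∧ S.ncard = m}

/-- The dimension of the cycle space: `|E| - |V| + c(G)` (as a natural number;
note `|E| + c(G) ≥ |V|` always holds). -/
noncomputable def cycleDim {V : Type*} (G : SimpleGraph V) : ℕ :=
  Nat.card G.edgeSet + Nat.card G.ConnectedComponent - Nat.card V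

/-- `x` lies on a cycle of `G`. -/
def OnCycle {V : Type*} (G : SimpleGraph V) (x : V) : Prop :=
  ∃ (u : V) (w : G.Walk u u), w.IsCycle ∧ x ∈ w.support

/-!
Deleting the edges outside a spanning forest destroys all cycles, and there are exactly `ω(G)` of
them, so one endpoint of each forms a set of `ω(G)` vertices meeting every cycle. When two distinct
cycles meet, one vertex can be saved. Say the first has an edge not on the second; walking along the
first cycle from a common vertex, one finds such an edge `e` with an endpoint `y` on the second
cycle. Let `f` be an edge of the second cycle at `y`. Deleting `e`, which breaks the first cycle but
not the second, and then `f` lowers `ω` by two, while the single vertex `y` covers both edges. Hence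
some `X` with at most `ω(G) - 1` vertices leaves a forest `G - X`.

It remains to delete at most `1/k` of the vertices of a forest so that every component that is left
has fewer than `k` vertices. Give every vertex weight one and strip leaves: a leaf of weight at
least `k` is deleted, a lighter one is contracted into its neighbour, which absorbs its weight. Each
deletion uses up weight at least `k`, and the weights never add up to more than they did initially.
-/

section CycleSpace

lemma reachable_of_forall_adj {V : Type*} {G H : SimpleGraph V}
    (h : ∀ a b, G.Adj a b → H.Reachable a b) {a b : V} (hab : G.Reachable a b) :
    H.Reachable a b := by
  obtain ⟨p⟩ := hab
  induction p with
  | nil => rfl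
  | cons hadj _ ih => exact (h _ _ hadj).trans ih

lemma card_connectedComponent_congr {V : Type*} {G H : SimpleGraph V}
    (h : G.Reachable = H.Reachable) :
    Nat.card G.ConnectedComponent = Nat.card H.ConnectedComponent := by
  simp only [ConnectedComponent, h]

lemma injective_sigma_mapEdgeSet {V : Type*} (G : SimpleGraph V) :
    Function.Injective fun x : Σ c : G.ConnectedComponent, c.toSimpleGraph.edgeSet ↦
      x.1.toSimpleGraph_hom.mapEdgeSet x.2 := by
  rintro ⟨c, e, he⟩ ⟨d, f, hf⟩ h
  have hef : e.map Subtype.val = f.map Subtype.val := congrArg Subtype.val h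
  obtain rfl : c = d := by
    induction e with | _ a a'
    have ha : (a : V) ∈ f.map Subtype.val := hef ▸ Sym2.mem_mk_left _ _
    obtain ⟨b, -, hb⟩ := Sym2.mem_map.1 ha
    exact a.2.symm.trans (hb ▸ b.2)
  obtain rfl : e = f := Sym2.map.injective Subtype.val_injective hef
  rfl

variable {V : Type*} [Finite V]

theorem card_le_card_edgeSet_add_card_connectedComponent (G : SimpleGraph V) :
    Nat.card V ≤ Nat.card G.edgeSet + Nat.card G.ConnectedComponent := by
  have := Fintype.ofFinite G.ConnectedComponent
  calc Nat.card V = ∑ c : G.ConnectedComponent, Nat.card c := by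
        rw [← Nat.card_sigma]
        exact Nat.card_congr (Equiv.sigmaFiberEquiv G.connectedComponentMk).symm
    _ ≤ ∑ c : G.ConnectedComponent, (Nat.card c.toSimpleGraph.edgeSet + 1) :=
        Finset.sum_le_sum fun c _ ↦ c.connected_toSimpleGraph.card_vert_le_card_edgeSet_add_one
    _ = Nat.card (Σ c : G.ConnectedComponent, c.toSimpleGraph.edgeSet) +
          Nat.card G.ConnectedComponent := by
        simp [Finset.sum_add_distrib, Nat.card_sigma]
    _ ≤ Nat.card G.edgeSet + Nat.card G.ConnectedComponent := by
        gcongr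
        exact Nat.card_le_card_of_injective _ (injective_sigma_mapEdgeSet G)

lemma cycleDim_add_card (G : SimpleGraph V) :
    cycleDim G + Nat.card V = Nat.card G.edgeSet + Nat.card G.ConnectedComponent :=
  Nat.sub_add_cancel (card_le_card_edgeSet_add_card_connectedComponent G)

theorem cycleDim_deleteEdges_add_one {G : SimpleGraph V} {u : V} {w : G.Walk u u}
    (hw : w.IsCycle) {e : Sym2 V} (he : e ∈ w.edges) :
    cycleDim (G.deleteEdges {e}) + 1 = cycleDim G := by
  have heG : e ∈ G.edgeSet := w.edges_subset_edgeSet he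
  have hadj : ∀ a b, G.Adj a b → (G.deleteEdges {e}).Reachable a b := by
    intro a b hab
    by_cases hne : s(a, b) = e
    · subst hne
      by_contra hbridge
      exact (isBridge_iff.2 hbridge).notMem_edges_of_isCycle hw he
    · exact Adj.reachable (deleteEdges_adj.2 ⟨hab, hne⟩)
  have hcomp : Nat.card (G.deleteEdges {e}).ConnectedComponent = Nat.card G.ConnectedComponent :=
    card_connectedComponent_congr <| funext₂ fun a b ↦ propext
      ⟨fun h ↦ h.mono (deleteEdges_le _), reachable_of_forall_adj hadj⟩
  have hedge : Nat.card (G.deleteEdges {e}).edgeSet + 1 = Nat.card G.edgeSet := by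
    rw [edgeSet_deleteEdges]
    exact Set.ncard_sdiff_singleton_add_one heG
  have := cycleDim_add_card G
  have := cycleDim_add_card (G.deleteEdges {e})
  omega

theorem exists_isAcyclic_deleteEdges (G : SimpleGraph V) :
    ∃ D : Set (Sym2 V), D.ncard ≤ cycleDim G ∧ (G.deleteEdges D).IsAcyclic := by
  obtain ⟨F, hFG, hF, hreach⟩ := G.exists_isAcyclic_reachable_eq_le
  refine ⟨G.edgeSet \ F.edgeSet, ?_, by rwa [deleteEdges_sdiff_eq_of_le hFG]⟩
  have hedge : (G.edgeSet \ F.edgeSet).ncard + Nat.card F.edgeSet = Nat.card G.edgeSet :=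
    Set.ncard_sdiff_add_ncard_of_subset (edgeSet_subset_edgeSet.2 hFG)
  have := card_connectedComponent_congr hreach
  have := card_le_card_edgeSet_add_card_connectedComponent F
  have := cycleDim_add_card G
  omega

end CycleSpace

section FeedbackVertexSet

variable {V : Type*} {G : SimpleGraph V}

lemma isAcyclic_induce_compl_of_deleteEdges {D : Set (Sym2 V)} {X : Set V}
    (hD : (G.deleteEdges D).IsAcyclic) (hX : ∀ e ∈ D, ∃ x ∈ X, x ∈ e) :
    (G.induce Xᶜ).IsAcyclic := by
  refine hD.comap ⟨Subtype.val, fun {a b} hab ↦ deleteEdges_adj.2 ⟨hab, fun he ↦ ?_⟩⟩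
    Subtype.val_injective
  obtain ⟨x, hxX, hx⟩ := hX _ he
  obtain rfl | rfl := Sym2.mem_iff.1 hx
  exacts [a.2 hxX, b.2 hxX]

lemma exists_mem_edges_notMem_edges_mem_support {a b c d : V} {p : G.Walk a b} {q : G.Walk c d}
    (ha : a ∈ q.support) (hpq : ¬ p.edges ⊆ q.edges) :
    ∃ e ∈ p.edges, e ∉ q.edges ∧ ∃ y ∈ e, y ∈ q.support := by
  classical
  by_cases hsub : p.support ⊆ q.support
  · obtain ⟨e, hep, heq⟩ : ∃ e ∈ p.edges, e ∉ q.edges := by simpa [List.subset_def] using hpq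
    exact ⟨e, hep, heq, e.out.1, e.out_fst_mem,
      hsub (Walk.mem_support_of_mem_edges hep e.out_fst_mem)⟩
  · obtain ⟨z, hzp, hzq⟩ : ∃ z ∈ p.support, z ∉ q.support := by
      simpa [List.subset_def] using hsub
    obtain ⟨δ, hδ, hfst, hsnd⟩ :=
      (p.takeUntil z hzp).exists_boundary_dart {y | y ∈ q.support} ha hzq
    exact ⟨δ.edge, List.mem_map_of_mem (p.darts_takeUntil_subset_darts hzp hδ),
      fun hq ↦ hsnd (q.snd_mem_support_of_mem_edges hq), δ.fst, Sym2.mem_mk_left _ _, hfst⟩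

theorem exists_incident_edges_cycleDim_deleteEdges [Finite V] {u v x : V} {w₁ : G.Walk u u}
    {w₂ : G.Walk v v} (hw₁ : w₁.IsCycle) (hw₂ : w₂.IsCycle) (hne : ¬ w₁.edges ⊆ w₂.edges)
    (hx₁ : x ∈ w₁.support) (hx₂ : x ∈ w₂.support) :
    ∃ y e f, y ∈ e ∧ y ∈ f ∧ cycleDim (G.deleteEdges {e, f}) + 2 = cycleDim G := by
  classical
  have hrot : ∀ e, e ∈ (w₁.rotate x hx₁).edges ↔ e ∈ w₁.edges := fun e ↦
    (w₁.rotate_edges x hx₁).mem_iff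
  obtain ⟨e, he₁, he₂, y, hye, hy⟩ := exists_mem_edges_notMem_edges_mem_support
    (p := w₁.rotate x hx₁) hx₂ (by simpa only [List.subset_def, hrot] using hne)
  obtain ⟨f, hf, hyf⟩ := (Walk.mem_support_iff_exists_mem_edges_of_not_nil hw₂.not_nil).1 hy
  refine ⟨y, e, f, hye, hyf, ?_⟩
  have he := cycleDim_deleteEdges_add_one hw₁ ((hrot e).1 he₁)
  have hf := cycleDim_deleteEdges_add_one
    (hw₂.toDeleteEdges G {e} fun _ hd hde ↦ he₂ (Set.mem_singleton_iff.1 hde ▸ hd))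
    (e := f) (by simpa using hf)
  rw [deleteEdges_deleteEdges] at hf
  rw [Set.insert_eq]
  omega

theorem exists_isAcyclic_induce_compl [Finite V] {E : Set (Sym2 V)} {y : V}
    (hE : ∀ d ∈ E, y ∈ d) :
    ∃ X : Set V, X.ncard ≤ cycleDim (G.deleteEdges E) + 1 ∧ (G.induce Xᶜ).IsAcyclic := by
  obtain ⟨D, hDcard, hD⟩ := exists_isAcyclic_deleteEdges (G.deleteEdges E)
  rw [deleteEdges_deleteEdges] at hD
  refine ⟨insert y ((fun d ↦ d.out.1) '' D), ?_, isAcyclic_induce_compl_of_deleteEdges hD ?_⟩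
  · calc (insert y ((fun d ↦ d.out.1) '' D)).ncard
        ≤ ((fun d : Sym2 V ↦ d.out.1) '' D).ncard + 1 := Set.ncard_insert_le _ _
      _ ≤ D.ncard + 1 := by gcongr; exact Set.ncard_image_le
      _ ≤ cycleDim (G.deleteEdges E) + 1 := by gcongr
  · rintro d (hd | hd)
    · exact ⟨y, Set.mem_insert _ _, hE d hd⟩
    · exact ⟨_, Set.mem_insert_of_mem _ (Set.mem_image_of_mem _ hd), d.out_fst_mem⟩

end FeedbackVertexSet

section WeightedForest

variable {V : Type*} {G : SimpleGraph V}

/-- Every connected component of `G[S]` has total weight at most `m`. Quantifying over all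
connected subsets of `S` instead of the components is equivalent and avoids nested subtypes. -/
def HasLightComponents (G : SimpleGraph V) (w : V → ℕ) (m : ℕ) (S : Finset V) : Prop :=
  ∀ T ⊆ S, (G.induce (T : Set V)).Preconnected → ∑ v ∈ T, w v ≤ m

lemma preconnected_induce_image_val {S : Set V} {T : Set S}
    (hT : ((G.induce S).induce T).Preconnected) :
    (G.induce (Subtype.val '' T)).Preconnected := by
  let f : (G.induce S).induce T ↪g G := (Embedding.induce S).comp (Embedding.induce T)
  have hf : Set.range f = Subtype.val '' T :=
    (Set.range_comp Subtype.val Subtype.val).trans (by rw [Subtype.range_coe])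
  exact hf ▸ f.isoInduceRange.preconnected_iff.1 hT

lemma HasLightComponents.isGenKIndep {k : ℕ} {S : Finset V}
    (hS : HasLightComponents G 1 (k - 1) S) : IsGenKIndep G k S := by
  classical
  intro c
  let T : Set V := Subtype.val '' c.supp
  have hTS : T ⊆ S := Subtype.coe_image_subset _ _
  obtain ⟨T', hT'⟩ := (S.finite_toSet.subset hTS).exists_finset_coe
  have hcard : Nat.card c.supp = T'.card := by
    rw [← Set.ncard_coe_finset, hT', Set.ncard_image_of_injective _ Subtype.val_injective,
      Nat.card_coe_set_eq]
  have hconn : (G.induce (T' : Set V)).Preconnected :=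
    hT' ▸ preconnected_induce_image_val c.connected_toSimpleGraph.preconnected
  rw [hcard, Finset.card_eq_sum_ones]
  exact hS T' (Finset.coe_subset.1 (hT'.trans_subset hTS)) hconn

lemma exists_subsingleton_neighborSet_of_isAcyclic [Finite G.edgeSet] [Nonempty V]
    (hG : G.IsAcyclic) : ∃ v, (G.neighborSet v).Subsingleton := by
  obtain ⟨u, v, p, hp, hmax⟩ := Walk.exists_isPath_forall_isPath_length_le_length G
  have hsnd : ∀ a, G.Adj u a → a = p.snd := by
    intro a ha
    refine hG.eq_snd_of_adj_start hp ha ?_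
    by_contra hap
    have := hmax _ _ (p.cons ha.symm) (hp.cons hap)
    simp at this
  exact ⟨u, fun a ha b hb ↦ (hsnd a ha).trans (hsnd b hb).symm⟩

lemma exists_subsingleton_neighborSet_inter_of_isAcyclic_induce {W : Finset V} (hW : W.Nonempty)
    (hac : (G.induce (W : Set V)).IsAcyclic) :
    ∃ l ∈ W, (G.neighborSet l ∩ W).Subsingleton := by
  have := hW.to_subtype
  obtain ⟨⟨l, hl⟩, hleaf⟩ := exists_subsingleton_neighborSet_of_isAcyclic hac
  exact ⟨l, hl, fun a ha b hb ↦
    congrArg Subtype.val (@hleaf ⟨a, ha.2⟩ ha.1 ⟨b, hb.2⟩ hb.1)⟩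

variable [DecidableEq V]

lemma preconnected_induce_erase_of_subsingleton {T : Finset V} {l : V}
    (hT : (G.induce (T : Set V)).Preconnected) (hleaf : (G.neighborSet l ∩ T).Subsingleton) :
    (G.induce (T.erase l : Set V)).Preconnected := by
  have himage : (T.erase l : Set V) = Subtype.val '' {v : (T : Set V) | (v : V) ≠ l} := by
    ext; simp [and_comm]
  rw [himage]
  refine preconnected_induce_image_val (hT.induce_of_degree_eq_one fun v hv a ha b hb ↦ ?_)
  obtain rfl : (v : V) = l := by simpa using hv
  exact Subtype.ext (hleaf ⟨ha, a.2⟩ ⟨hb, b.2⟩)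

/-- The vertex weights after contracting the leaf `l` into its neighbour, which absorbs `w l`; all
other weights, including that of `l` itself, are left unchanged. -/
def absorbLeaf (G : SimpleGraph V) [DecidableRel G.Adj] (w : V → ℕ) (l v : V) : ℕ :=
  w v + if G.Adj l v then w l else 0

lemma HasLightComponents.insert_leaf [DecidableRel G.Adj] {w : V → ℕ} {m : ℕ} {S : Finset V} {l : V}
    (hS : HasLightComponents G (absorbLeaf G w l) m S) (hl : w l ≤ m)
    (hleaf : (G.neighborSet l ∩ S).Subsingleton) :
    HasLightComponents G w m (insert l S) := by
  intro T hTS hT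
  have hle : ∀ v, w v ≤ absorbLeaf G w l v := fun v ↦ Nat.le_add_right _ _
  by_cases hlT : l ∉ T
  · exact (Finset.sum_le_sum fun v _ ↦ hle v).trans
      (hS T ((Finset.subset_insert_iff_of_notMem hlT).1 hTS) hT)
  rw [not_not] at hlT
  have herase : T.erase l ⊆ S := Finset.subset_insert_iff.1 hTS
  obtain hempty | ⟨a, ha⟩ := (T.erase l).eq_empty_or_nonempty
  · rwa [← Finset.add_sum_erase _ _ hlT, hempty, Finset.sum_empty, add_zero]
  have : Nontrivial (T : Set V) :=
    ⟨⟨l, hlT⟩, ⟨a, Finset.mem_of_mem_erase ha⟩, fun h ↦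
      Finset.ne_of_mem_erase ha (congrArg Subtype.val h).symm⟩
  obtain ⟨⟨p, hpT⟩, hlp⟩ := hT.exists_adj_of_nontrivial ⟨l, hlT⟩
  have hlp : G.Adj l p := hlp
  have hp : p ∈ T.erase l := Finset.mem_erase.2 ⟨hlp.ne', hpT⟩
  have hleafT : (G.neighborSet l ∩ T).Subsingleton := hleaf.anti fun b hb ↦
    ⟨hb.1, herase (Finset.mem_erase.2 ⟨(G.ne_of_adj hb.1).symm, hb.2⟩)⟩
  calc ∑ v ∈ T, w v = w l + ∑ v ∈ T.erase l, w v := (Finset.add_sum_erase _ _ hlT).symm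
    _ = (if G.Adj l p then w l else 0) + ∑ v ∈ T.erase l, w v := by rw [if_pos hlp]
    _ ≤ (∑ v ∈ T.erase l, if G.Adj l v then w l else 0) + ∑ v ∈ T.erase l, w v := by
        gcongr
        exact Finset.single_le_sum (f := fun v ↦ if G.Adj l v then w l else 0)
          (fun _ _ ↦ Nat.zero_le _) hp
    _ = ∑ v ∈ T.erase l, absorbLeaf G w l v := by
        simp only [absorbLeaf, Finset.sum_add_distrib, add_comm]
    _ ≤ m := hS _ herase (preconnected_induce_erase_of_subsingleton hT hleafT)

lemma sum_erase_absorbLeaf_le [DecidableRel G.Adj] {w : V → ℕ} {W : Finset V} {l : V}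
    (hl : l ∈ W) (hleaf : (G.neighborSet l ∩ W).Subsingleton) :
    ∑ v ∈ W.erase l, absorbLeaf G w l v ≤ ∑ v ∈ W, w v := by
  have hcard : ({v ∈ W.erase l | G.Adj l v} : Finset V).card ≤ 1 := by
    refine Finset.card_le_one.2 fun a ha b hb ↦ ?_
    simp only [Finset.mem_filter, Finset.mem_erase] at ha hb
    exact hleaf ⟨ha.2, ha.1.2⟩ ⟨hb.2, hb.1.2⟩
  calc ∑ v ∈ W.erase l, absorbLeaf G w l v
      = ∑ v ∈ W.erase l, w v + ({v ∈ W.erase l | G.Adj l v} : Finset V).card * w l := by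
        simp only [absorbLeaf, Finset.sum_add_distrib, ← Finset.sum_filter, Finset.sum_const,
          smul_eq_mul]
    _ ≤ ∑ v ∈ W.erase l, w v + 1 * w l := by gcongr
    _ = ∑ v ∈ W, w v := by rw [one_mul, Finset.sum_erase_add _ _ hl]

theorem exists_hasLightComponents_sdiff {W : Finset V} (hW : (G.induce (W : Set V)).IsAcyclic)
    (w : V → ℕ) (m : ℕ) :
    ∃ R ⊆ W, (m + 1) * R.card ≤ ∑ v ∈ W, w v ∧ HasLightComponents G w m (W \ R) := by
  classical
  induction hn : W.card generalizing W w with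
  | zero =>
    obtain rfl := Finset.card_eq_zero.1 hn
    exact ⟨∅, subset_rfl, by simp, fun T hT _ ↦ by simp [Finset.subset_empty.1 hT]⟩
  | succ n ih =>
    obtain ⟨l, hl, hleaf⟩ := exists_subsingleton_neighborSet_inter_of_isAcyclic_induce
      (Finset.card_pos.1 (hn ▸ n.succ_pos)) hW
    have hac : (G.induce (W.erase l : Set V)).IsAcyclic :=
      hW.embedding (G.induceHomOfLE (Finset.coe_subset.2 (W.erase_subset l)))
    have hcard : (W.erase l).card = n := by rw [Finset.card_erase_of_mem hl, hn]; rfl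
    by_cases hlight : w l ≤ m
    · obtain ⟨R, hRW, hR, hS⟩ := ih hac (absorbLeaf G w l) hcard
      refine ⟨R, hRW.trans (W.erase_subset l), hR.trans (sum_erase_absorbLeaf_le hl hleaf), ?_⟩
      have hlR : l ∉ R := fun h ↦ W.notMem_erase l (hRW h)
      rw [← Finset.insert_erase hl, Finset.insert_sdiff_of_notMem _ hlR]
      refine hS.insert_leaf hlight (hleaf.anti (Set.inter_subset_inter_right _ ?_))
      exact Finset.coe_subset.2 (Finset.sdiff_subset.trans (W.erase_subset l))
    · obtain ⟨R, hRW, hR, hS⟩ := ih hac w hcard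
      have hlR : l ∉ R := fun h ↦ W.notMem_erase l (hRW h)
      refine ⟨insert l R, Finset.insert_subset hl (hRW.trans (W.erase_subset l)), ?_, ?_⟩
      · calc (m + 1) * (insert l R).card = (m + 1) * R.card + (m + 1) := by
              rw [Finset.card_insert_of_notMem hlR, mul_add_one]
          _ ≤ ∑ v ∈ W.erase l, w v + w l := by gcongr; omega
          _ = ∑ v ∈ W, w v := Finset.sum_erase_add _ _ hl
      · rwa [Finset.sdiff_insert, ← Finset.erase_sdiff_comm]

end WeightedForest

section Forest

variable {V : Type*} [Finite V] {G : SimpleGraph V} {k : ℕ}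

lemma IsGenKIndep.ncard_le_alphaK {S : Set V} (hS : IsGenKIndep G k S) :
    S.ncard ≤ alphaK G k := by
  refine le_csSup ⟨Nat.card V, ?_⟩ ⟨S, hS, rfl⟩
  rintro _ ⟨T, -, rfl⟩
  exact T.ncard_le_card

theorem pred_mul_ncard_le_mul_alphaK {W : Set V} (hW : (G.induce W).IsAcyclic) :
    (k - 1) * W.ncard ≤ k * alphaK G k := by
  classical
  obtain _ | m := k
  · simp
  obtain ⟨W, rfl⟩ := W.toFinite.exists_finset_coe
  obtain ⟨R, hRW, hR, hS⟩ := exists_hasLightComponents_sdiff hW 1 m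
  have hα : (W \ R).card ≤ alphaK G (m + 1) := by
    rw [← Set.ncard_coe_finset]
    exact (HasLightComponents.isGenKIndep (k := m + 1) hS).ncard_le_alphaK
  have hcard := Finset.card_sdiff_add_card_eq_card hRW
  simp only [Pi.one_apply, Finset.sum_const, smul_eq_mul, mul_one] at hR
  rw [Set.ncard_coe_finset, Nat.add_sub_cancel]
  nlinarith

end Forest

/-- If `G` has two distinct cycles sharing a vertex, then
`α_k(G) ≥ ((k-1)/k)·(n - ω(G) + 1)`; in particular, equality in the lower bound
`α_k(G) ≥ ((k-1)/k)(n - ω(G))` forces the cycles of `G` to be pairwise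
vertex-disjoint. -/
theorem alphaK_lower_bound_of_overlapping_cycles {V : Type*} [Fintype V]
    (G : SimpleGraph V) (k : ℕ) (hk : 2 ≤ k)
    (hover : ∃ (u v : V) (w₁ : G.Walk u u) (w₂ : G.Walk v v),
      w₁.IsCycle ∧ w₂.IsCycle ∧ {e | e ∈ w₁.edges} ≠ {e | e ∈ w₂.edges} ∧
        ∃ x, x ∈ w₁.support ∧ x ∈ w₂.support) :
    ((k : ℚ) - 1) / k * ((Nat.card V : ℚ) - cycleDim G + 1) ≤ alphaK G k := by
  obtain ⟨u, v, w₁, w₂, hw₁, hw₂, hne, x, hx₁, hx₂⟩ := hover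
  obtain ⟨y, e, f, hye, hyf, hdim⟩ :
      ∃ y e f, y ∈ e ∧ y ∈ f ∧ cycleDim (G.deleteEdges {e, f}) + 2 = cycleDim G := by
    by_cases hsub : w₁.edges ⊆ w₂.edges
    · exact exists_incident_edges_cycleDim_deleteEdges hw₂ hw₁
        (fun hsub' ↦ hne (Set.Subset.antisymm hsub hsub')) hx₂ hx₁
    · exact exists_incident_edges_cycleDim_deleteEdges hw₁ hw₂ hsub hx₁ hx₂
  obtain ⟨X, hXcard, hX⟩ := exists_isAcyclic_induce_compl (G := G) (E := {e, f})
    (by rintro d (rfl | rfl) <;> assumption)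
  have hk₀ : 0 < k := by omega
  have hcard : (Nat.card V : ℚ) - cycleDim G + 1 ≤ Xᶜ.ncard := by
    have := Set.ncard_add_ncard_compl X
    have : Nat.card V + 1 ≤ Xᶜ.ncard + cycleDim G := by omega
    have : (Nat.card V : ℚ) + 1 ≤ Xᶜ.ncard + cycleDim G := by exact_mod_cast this
    linarith
  have hα : ((k : ℚ) - 1) * Xᶜ.ncard ≤ k * alphaK G k := by
    rw [← Nat.cast_pred hk₀]
    exact_mod_cast pred_mul_ncard_le_mul_alphaK hX
  rw [div_mul_eq_mul_div, div_le_iff₀' (by exact_mod_cast hk₀)]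
  refine (mul_le_mul_of_nonneg_left hcard ?_).trans hα
  exact sub_nonneg.2 (by exact_mod_cast hk₀)
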